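/- Let α be an irrational real number satisfying the Brjuno condition B, let δ > 0, β ∈ ℝ, and let g : B_δ → ℂ be a bounded holomorphic 1-periodic function with ∫₀¹ g(x) dx = 2πiβ. Then there exists a holomorphic, nowhere-vanishing 1-periodic function u₁ : B_δ → ℂ∖{0} such that u₁(θ) e^{g(θ)} = e^{2πiβ} u₁(θ+α) for all θ ∈ B_δ; moreover u₁ can be taken of the form u₁ = e^v with v holomorphic 1-periodic on B_δ. -/

import Mathlib

noncomputable def distNearestInt (x : ℝ) : ℝ := |x - round x|

noncomputable def GammaA (α : ℝ) (N : ℕ) : ℝ :=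
  sSup ((fun n : ℤ => (distNearestInt ((n : ℝ) * α))⁻¹) '' {n : ℤ | n ≠ 0 ∧ |n| ≤ (N : ℤ)})

noncomputable def GammaAB (α β : ℝ) (N : ℕ) : ℝ :=
  sSup ((fun n : ℤ => (distNearestInt ((n : ℝ) * α - β))⁻¹) '' {n : ℤ | |n| ≤ (N : ℤ)})

def IsNonRationalPair (α β : ℝ) : Prop := ∀ k m : ℤ, (k : ℝ) * α - β ≠ (m : ℝ)

def BrjunoCond (α : ℝ) : Prop :=
  Summable (fun N : ℕ => Real.log (GammaA α (N + 1)) / ((N : ℝ) + 1) ^ 2)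

def Strip (δ : ℝ) : Set ℂ := {θ : ℂ | |θ.im| < δ}

/-!
Taking logarithms, the problem becomes the additive equation `v (θ + α) - v θ = g θ - ∫ g`, solved
on the Fourier side by dividing the `n`-th coefficient of `g` by `exp (2πinα) - 1`. Moving the
contour of integration shows that the coefficients of a periodic holomorphic function on the strip
`|Im θ| < δ` decay like `exp (-2πs|n|)` for every `s < δ`, and this decay in turn makes a Fourier
series holomorphic on the whole strip. The width is therefore preserved as soon as the
inverses of the small divisors grow subexponentially, that is, as soon as
`log (GammaA α N) = o(N)`. The Brjuno condition implies this because `GammaA α` is monotone: the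
block `N ≤ k < 2N` of the Brjuno sum is at least `log (GammaA α N) / (4N)`.
-/

section FourierMode

open Complex

/-- The exponential `θ ↦ exp (2πinθ)`, as an entire function: it extends Mathlib's character
`fourier n` of the circle `ℝ / ℤ`. -/
noncomputable def fourierMode (n : ℤ) (θ : ℂ) : ℂ := exp (2 * Real.pi * I * n * θ)

lemma fourierMode_add (n : ℤ) (θ η : ℂ) :
    fourierMode n (θ + η) = fourierMode n θ * fourierMode n η := by
  simp only [fourierMode, mul_add, exp_add]

lemma fourierMode_one (n : ℤ) : fourierMode n 1 = 1 := by
  rw [fourierMode, mul_one, mul_comm]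
  exact exp_int_mul_two_pi_mul_I n

lemma fourierMode_zero_left (θ : ℂ) : fourierMode 0 θ = 1 := by
  simp [fourierMode]

lemma fourierMode_neg_mul_self (n : ℤ) (θ : ℂ) : fourierMode (-n) θ * fourierMode n θ = 1 := by
  simp [fourierMode, ← exp_add]

-- `T` is a variable since `fourierCoeffOn` over `[0, 1]` is an integral over `AddCircle (1 - 0)`.
lemma fourier_coe_eq_fourierMode (n : ℤ) {T : ℝ} (hT : T = 1) (x : ℝ) :
    fourier n (x : AddCircle T) = fourierMode n x := by
  simp [fourierMode, hT]

lemma norm_fourierMode (n : ℤ) (θ : ℂ) :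
    ‖fourierMode n θ‖ = Real.exp (-(2 * Real.pi * n * θ.im)) := by
  have hre : 2 * (Real.pi : ℂ) * I * n * θ = ((2 * Real.pi * n : ℝ) : ℂ) * (I * θ) := by
    push_cast
    ring
  rw [fourierMode, norm_exp, hre, re_ofReal_mul, I_mul_re, mul_neg]

lemma norm_fourierMode_le (n : ℤ) {θ : ℂ} {r : ℝ} (h : |θ.im| ≤ r) :
    ‖fourierMode n θ‖ ≤ Real.exp (2 * Real.pi * r * |(n : ℝ)|) := by
  have hn : -((n : ℝ) * θ.im) ≤ r * |(n : ℝ)| :=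
    calc -((n : ℝ) * θ.im) ≤ |θ.im| * |(n : ℝ)| := by
          rw [← abs_mul, mul_comm θ.im]
          exact neg_le_abs _
      _ ≤ r * |(n : ℝ)| := by gcongr
  rw [norm_fourierMode, Real.exp_le_exp]
  linarith [mul_le_mul_of_nonneg_left hn Real.two_pi_pos.le]

lemma differentiable_fourierMode (n : ℤ) : Differentiable ℂ (fourierMode n) := by
  unfold fourierMode
  fun_prop

lemma four_mul_distNearestInt_le_norm_exp_sub_one (x : ℝ) :
    4 * distNearestInt x ≤ ‖exp (2 * Real.pi * I * x) - 1‖ := by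
  set d : ℝ := x - round x
  have hexp : exp (2 * Real.pi * I * x) = exp (I * (2 * Real.pi * d : ℝ)) :=
    exp_eq_exp_iff_exists_int.2 ⟨round x, by simp only [d]; push_cast; ring⟩
  have habs : |Real.pi * d| = Real.pi * |d| := by rw [abs_mul, abs_of_pos Real.pi_pos]
  have hsin : 2 * |d| ≤ |Real.sin (Real.pi * d)| := by
    have hd : |Real.pi * d| ≤ Real.pi / 2 := by
      rw [habs]
      linarith [mul_le_mul_of_nonneg_left (abs_sub_round x) Real.pi_pos.le]
    have hjordan := Real.mul_abs_le_abs_sin hd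
    rwa [habs, ← mul_assoc, div_mul_cancel₀ _ Real.pi_ne_zero] at hjordan
  rw [hexp, norm_exp_I_mul_ofReal_sub_one, Real.norm_eq_abs, abs_mul, abs_two,
    show 2 * Real.pi * d / 2 = Real.pi * d by ring]
  change 4 * |d| ≤ _
  linarith

lemma four_mul_distNearestInt_le_norm_fourierMode_sub_one (n : ℤ) (α : ℝ) :
    4 * distNearestInt (n * α) ≤ ‖fourierMode n α - 1‖ := by
  have h := four_mul_distNearestInt_le_norm_exp_sub_one (n * α)
  rwa [ofReal_mul, ofReal_intCast, ← mul_assoc] at h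

end FourierMode

section SmallDivisors

open Filter Asymptotics Topology

lemma distNearestInt_pos {x : ℝ} (hx : Irrational x) : 0 < distNearestInt x :=
  abs_pos.2 (sub_ne_zero.2 (hx.ne_int _))

lemma inv_distNearestInt_le_GammaA (α : ℝ) {N : ℕ} {n : ℤ} (hn : n ≠ 0) (hN : |n| ≤ N) :
    (distNearestInt (n * α))⁻¹ ≤ GammaA α N :=
  le_csSup (((Set.finite_Icc (-(N : ℤ)) N).subset fun _ hk => abs_le.1 hk.2).image _).bddAbove
    ⟨n, ⟨hn, hN⟩, rfl⟩

lemma GammaA_nonneg (α : ℝ) (N : ℕ) : 0 ≤ GammaA α N := by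
  refine Real.sSup_nonneg ?_
  rintro _ ⟨n, -, rfl⟩
  exact inv_nonneg.2 (abs_nonneg _)

lemma monotone_GammaA (α : ℝ) : Monotone (GammaA α) := by
  refine fun M N hMN => Real.sSup_le ?_ (GammaA_nonneg α N)
  rintro _ ⟨n, ⟨hn, hnM⟩, rfl⟩
  exact inv_distNearestInt_le_GammaA α hn (hnM.trans (by exact_mod_cast hMN))

lemma GammaA_zero (α : ℝ) : GammaA α 0 = 0 := by
  have hempty : {n : ℤ | n ≠ 0 ∧ |n| ≤ ((0 : ℕ) : ℤ)} = ∅ := by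
    ext n
    simp
  rw [GammaA, hempty, Set.image_empty, Real.sSup_empty]

lemma one_le_GammaA {α : ℝ} (hα : Irrational α) {N : ℕ} (hN : N ≠ 0) : 1 ≤ GammaA α N := by
  refine le_trans ?_
    (inv_distNearestInt_le_GammaA α one_ne_zero (by simpa using Nat.one_le_iff_ne_zero.2 hN))
  rw [Int.cast_one, one_mul]
  exact (one_le_inv₀ (distNearestInt_pos hα)).2 ((abs_sub_round α).trans (by norm_num))

lemma log_GammaA_nonneg {α : ℝ} (hα : Irrational α) (N : ℕ) : 0 ≤ Real.log (GammaA α N) := by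
  rcases eq_or_ne N 0 with rfl | hN
  · rw [GammaA_zero, Real.log_zero]
  · exact Real.log_nonneg (one_le_GammaA hα hN)

lemma monotone_log_GammaA {α : ℝ} (hα : Irrational α) :
    Monotone fun N => Real.log (GammaA α N) := by
  intro M N hMN
  rcases eq_or_ne M 0 with rfl | hM
  · simpa only [GammaA_zero, Real.log_zero] using log_GammaA_nonneg hα N
  · exact Real.log_le_log (zero_lt_one.trans_le (one_le_GammaA hα hM)) (monotone_GammaA α hMN)

lemma isLittleO_natCast_of_summable_div_sq {a : ℕ → ℝ} (ha : Monotone a) (h0 : ∀ n, 0 ≤ a n)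
    (hs : Summable fun n : ℕ => a n / (n : ℝ) ^ 2) : a =o[atTop] fun n : ℕ => (n : ℝ) := by
  let S (n : ℕ) : ℝ := ∑ k ∈ Finset.range n, a k / (k : ℝ) ^ 2
  have hblock : Tendsto (fun n => 4 * (S (2 * n) - S n)) atTop (𝓝 0) := by
    have hS : Tendsto S atTop (𝓝 (∑' k, a k / (k : ℝ) ^ 2)) := hs.hasSum.tendsto_sum_nat
    simpa using ((hS.comp (tendsto_id.const_mul_atTop' two_pos)).sub hS).const_mul 4
  have hle : ∀ᶠ n : ℕ in atTop, a n / n ≤ 4 * (S (2 * n) - S n) := by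
    filter_upwards [eventually_gt_atTop 0] with n hn
    calc a n / n = 4 * ∑ _k ∈ Finset.Ico n (2 * n), a n / (2 * n : ℝ) ^ 2 := by
          rw [Finset.sum_const, Nat.card_Ico, two_mul n, Nat.add_sub_cancel, nsmul_eq_mul]
          field_simp
          norm_num
      _ ≤ 4 * ∑ k ∈ Finset.Ico n (2 * n), a k / (k : ℝ) ^ 2 := by
          gcongr with k hk
          · exact h0 k
          · have hk0 : 0 < k := hn.trans_le (Finset.mem_Ico.1 hk).1
            positivity
          · exact ha (Finset.mem_Ico.1 hk).1
          · exact_mod_cast (Finset.mem_Ico.1 hk).2.le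
      _ = 4 * (S (2 * n) - S n) := by rw [Finset.sum_Ico_eq_sub _ (by lia)]
  rw [isLittleO_iff_tendsto' ((eventually_ne_atTop 0).mono fun n hn h =>
    absurd (Nat.cast_eq_zero.1 h) hn)]
  exact squeeze_zero' (.of_forall fun n => div_nonneg (h0 n) n.cast_nonneg) hle hblock

lemma BrjunoCond.isLittleO_log_GammaA {α : ℝ} (hB : BrjunoCond α) (hα : Irrational α) :
    (fun N => Real.log (GammaA α N)) =o[atTop] fun N : ℕ => (N : ℝ) := by
  refine isLittleO_natCast_of_summable_div_sq (monotone_log_GammaA hα) (log_GammaA_nonneg hα) ?_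
  refine (summable_nat_add_iff 1).1 ?_
  simpa only [Nat.cast_add, Nat.cast_one] using (show Summable _ from hB)

lemma fourierMode_sub_one_ne_zero {α : ℝ} (hα : Irrational α) {n : ℤ} (hn : n ≠ 0) :
    fourierMode n α - 1 ≠ 0 :=
  norm_pos_iff.1 <| (mul_pos four_pos (distNearestInt_pos (hα.intCast_mul hn))).trans_le
    (four_mul_distNearestInt_le_norm_fourierMode_sub_one n α)

lemma norm_inv_fourierMode_sub_one_le_GammaA {α : ℝ} (hα : Irrational α) {n : ℤ} (hn : n ≠ 0) :
    ‖(fourierMode n α - 1)⁻¹‖ ≤ GammaA α n.natAbs := by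
  have hpos : 0 < distNearestInt (n * α) := distNearestInt_pos (hα.intCast_mul hn)
  calc ‖(fourierMode n α - 1)⁻¹‖ ≤ (distNearestInt (n * α))⁻¹ := by
        rw [norm_inv]
        have h4 := four_mul_distNearestInt_le_norm_fourierMode_sub_one n α
        exact inv_anti₀ hpos (by linarith)
    _ ≤ GammaA α n.natAbs := inv_distNearestInt_le_GammaA α hn (Int.natCast_natAbs n).ge

lemma tendsto_natAbs_cofinite : Tendsto Int.natAbs cofinite atTop := by
  rw [← Nat.cofinite_eq_atTop]
  refine .cofinite_of_finite_preimage_singleton fun k =>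
    (Set.finite_Icc (-(k : ℤ)) k).subset fun n hn => ?_
  have hnk : n.natAbs = k := hn
  exact Set.mem_Icc.2 (by lia)

lemma isBigO_inv_fourierMode_sub_one {α : ℝ} (hα : Irrational α)
    (hΓ : (fun N => Real.log (GammaA α N)) =o[atTop] fun N : ℕ => (N : ℝ)) {ε : ℝ} (hε : 0 < ε) :
    (fun n : ℤ => (fourierMode n α - 1)⁻¹) =O[cofinite] fun n => Real.exp (ε * |(n : ℝ)|) := by
  refine .of_bound 1 ?_
  filter_upwards [tendsto_natAbs_cofinite.eventually (hΓ.bound hε), eventually_cofinite_ne 0]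
    with n hlog hn
  have hΓ1 : 1 ≤ GammaA α n.natAbs := one_le_GammaA hα (Int.natAbs_ne_zero.2 hn)
  have hexp : GammaA α n.natAbs ≤ Real.exp (ε * |(n : ℝ)|) := by
    rw [← Real.log_le_iff_le_exp (zero_lt_one.trans_le hΓ1)]
    refine (Real.le_norm_self _).trans (hlog.trans_eq ?_)
    rw [Real.norm_natCast, Nat.cast_natAbs, Int.cast_abs]
  rw [one_mul, Real.norm_of_nonneg (Real.exp_nonneg _)]
  exact (norm_inv_fourierMode_sub_one_le_GammaA hα hn).trans hexp

end SmallDivisors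

section StripDecay

open Filter Asymptotics

lemma isOpen_Strip (δ : ℝ) : IsOpen (Strip δ) :=
  isOpen_lt (by fun_prop) continuous_const

lemma summable_exp_neg_mul_abs_int {a : ℝ} (ha : 0 < a) :
    Summable fun n : ℤ => Real.exp (-(a * |(n : ℝ)|)) := by
  have h : Summable fun n : ℕ => Real.exp (-(a * (n : ℝ))) := by
    simpa [mul_comm] using Real.summable_exp_nat_mul_iff.2 (neg_neg_of_pos ha)
  exact Summable.of_nat_of_neg (by simpa using h) (by simpa using h)

/-- The decay of the Fourier coefficients of a `1`-periodic holomorphic function on `Strip δ`: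
exponential at every rate `2πs` with `s < δ`. No uniformity in `s` is asked for, so that unbounded
functions are covered. -/
def HasStripDecay (δ : ℝ) (c : ℤ → ℂ) : Prop :=
  ∀ s : ℝ, |s| < δ → c =O[cofinite] fun n : ℤ => Real.exp (-(2 * Real.pi * s * |(n : ℝ)|))

variable {δ : ℝ} {c : ℤ → ℂ}

lemma HasStripDecay.mul_of_subexponential (hc : HasStripDecay δ c) {d : ℤ → ℂ}
    (hd : ∀ ε : ℝ, 0 < ε → d =O[cofinite] fun n : ℤ => Real.exp (ε * |(n : ℝ)|)) :
    HasStripDecay δ fun n => c n * d n := by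
  intro s hs
  obtain ⟨t, hst, htδ⟩ := exists_between hs
  have ht : |t| < δ := by rwa [abs_of_pos ((abs_nonneg s).trans_lt hst)]
  have hε : 0 < 2 * Real.pi * (t - s) :=
    mul_pos Real.two_pi_pos (sub_pos.2 ((le_abs_self s).trans_lt hst))
  refine ((hc t ht).mul (hd _ hε)).congr_right fun n => ?_
  rw [← Real.exp_add]
  ring_nf

lemma HasStripDecay.summable_norm_mul_exp (hc : HasStripDecay δ c) {r : ℝ} (hr : |r| < δ) :
    Summable fun n : ℤ => ‖c n‖ * Real.exp (2 * Real.pi * r * |(n : ℝ)|) := by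
  obtain ⟨s, hrs, hsδ⟩ := exists_between hr
  have hs : |s| < δ := by rwa [abs_of_pos ((abs_nonneg r).trans_lt hrs)]
  have hgap : 0 < 2 * Real.pi * (s - r) :=
    mul_pos Real.two_pi_pos (sub_pos.2 ((le_abs_self r).trans_lt hrs))
  refine summable_of_isBigO (summable_exp_neg_mul_abs_int hgap) ?_
  refine ((hc s hs).norm_left.mul (isBigO_refl _ _)).congr_right fun n => ?_
  rw [← Real.exp_add]
  ring_nf

lemma norm_mul_fourierMode_le (c : ℤ → ℂ) (n : ℤ) {θ : ℂ} {r : ℝ} (h : |θ.im| ≤ r) :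
    ‖c n * fourierMode n θ‖ ≤ ‖c n‖ * Real.exp (2 * Real.pi * r * |(n : ℝ)|) := by
  rw [norm_mul]
  gcongr
  exact norm_fourierMode_le n h

lemma HasStripDecay.summable_mul_fourierMode (hc : HasStripDecay δ c) {θ : ℂ} (hθ : θ ∈ Strip δ) :
    Summable fun n => c n * fourierMode n θ :=
  .of_norm_bounded (hc.summable_norm_mul_exp (r := |θ.im|) (by rwa [abs_abs]))
    fun n => norm_mul_fourierMode_le c n le_rfl

lemma HasStripDecay.differentiableOn_tsum (hc : HasStripDecay δ c) :
    DifferentiableOn ℂ (fun θ => ∑' n, c n * fourierMode n θ) (Strip δ) := by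
  intro θ hθ
  obtain ⟨r, hθr, hrδ⟩ := exists_between (show |θ.im| < δ from hθ)
  have hr : |r| < δ := by rwa [abs_of_pos ((abs_nonneg _).trans_lt hθr)]
  have hdiff : DifferentiableOn ℂ (fun η => ∑' n, c n * fourierMode n η) (Strip r) :=
    Complex.differentiableOn_tsum_of_summable_norm (hc.summable_norm_mul_exp hr)
      (fun n => ((differentiable_fourierMode n).const_mul _).differentiableOn) (isOpen_Strip r)
      fun n η hη => norm_mul_fourierMode_le c n (le_of_lt hη)
  exact (hdiff.differentiableAt ((isOpen_Strip r).mem_nhds hθr)).differentiableWithinAt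

end StripDecay

section FourierCoefficients

open Complex

lemma fourierCoeffOn_zero_lt_one_eq (f : ℝ → ℂ) (n : ℤ) :
    fourierCoeffOn zero_lt_one f n = ∫ x in (0 : ℝ)..1, fourierMode (-n) x * f x := by
  simp only [fourierCoeffOn_eq_integral, fourier_coe_eq_fourierMode _ (sub_zero (1 : ℝ)), sub_zero,
    div_one, one_smul, smul_eq_mul]

lemma hasSum_fourierCoeffOn_mul_fourierMode {f : ℝ → ℂ} (hf : Continuous f)
    (hp : Function.Periodic f 1) (hs : Summable (fourierCoeffOn zero_lt_one f)) (x : ℝ) :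
    HasSum (fun n => fourierCoeffOn zero_lt_one f n * fourierMode n x) (f x) := by
  have : Fact ((0 : ℝ) < 1) := ⟨zero_lt_one⟩
  let F : C(AddCircle (1 : ℝ), ℂ) := ⟨hp.lift, continuous_coinduced_dom.2 hf⟩
  have hF (t : ℝ) : F t = f t := hp.lift_coe t
  have hcoeff : fourierCoeff F = fourierCoeffOn zero_lt_one f := by
    funext n
    simp only [fourierCoeff_eq_intervalIntegral F n 0, fourierCoeffOn_zero_lt_one_eq, hF,
      fourier_coe_eq_fourierMode _ rfl, zero_add, div_one, one_smul, smul_eq_mul]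
  have hsum := has_pointwise_sum_fourier_series_of_summable (hcoeff ▸ hs) x
  simpa only [hF, hcoeff, fourier_coe_eq_fourierMode _ rfl, smul_eq_mul] using hsum

lemma norm_fourierCoeffOn_le (f : ℝ → ℂ) (n : ℤ) :
    ‖fourierCoeffOn zero_lt_one f n‖ ≤ ∫ x in (0 : ℝ)..1, ‖f x‖ := by
  rw [fourierCoeffOn_zero_lt_one_eq]
  refine (intervalIntegral.norm_integral_le_integral_norm zero_le_one).trans_eq ?_
  simp [norm_fourierMode]

lemma ofReal_add_mul_I_mem_Strip {δ y : ℝ} (hy : |y| < δ) (x : ℝ) : (x + y * I : ℂ) ∈ Strip δ := by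
  simpa [Strip] using hy

lemma integral_add_mul_I_eq {δ : ℝ} {F : ℂ → ℂ} (hF : DifferentiableOn ℂ F (Strip δ))
    (hper : ∀ θ ∈ Strip δ, F (θ + 1) = F θ) {y : ℝ} (hy : |y| < δ) :
    ∫ x in (0 : ℝ)..1, F (x + y * I) = ∫ x in (0 : ℝ)..1, F x := by
  have hmem : ∀ t ∈ Set.uIcc 0 y, |t| < δ := fun t ht =>
    lt_of_le_of_lt (by simpa using Set.abs_sub_left_of_mem_uIcc ht) hy
  have hsides : ∫ t in (0 : ℝ)..y, F (1 + t * I) = ∫ t in (0 : ℝ)..y, F (t * I) :=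
    intervalIntegral.integral_congr fun t ht => by
      simpa [add_comm] using hper (t * I) (by simpa using ofReal_add_mul_I_mem_Strip (hmem t ht) 0)
  have hrect := integral_boundary_rect_eq_zero_of_differentiableOn F 0 (1 + y * I)
    (hF.mono fun z hz => hmem z.im (by simpa using hz.2))
  simp only [zero_re, zero_im, add_re, add_im, one_re, one_im, mul_re, mul_im, ofReal_re, ofReal_im,
    I_re, I_im, mul_zero, mul_one, zero_mul, sub_zero, add_zero, zero_add, ofReal_zero, ofReal_one,
    hsides, add_sub_cancel_right] at hrect
  exact (sub_eq_zero.1 hrect).symm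

/-- The `n`-th Fourier coefficient of the restriction of `g` to the real line. -/
noncomputable def realFourierCoeff (g : ℂ → ℂ) (n : ℤ) : ℂ :=
  fourierCoeffOn zero_lt_one (fun x : ℝ => g x) n

lemma realFourierCoeff_zero (g : ℂ → ℂ) : realFourierCoeff g 0 = ∫ x in (0 : ℝ)..1, g x := by
  simp [realFourierCoeff, fourierCoeffOn_zero_lt_one_eq, fourierMode_zero_left]

variable {δ : ℝ} {g : ℂ → ℂ}

lemma fourierCoeffOn_add_mul_I (hg : DifferentiableOn ℂ g (Strip δ))
    (hper : ∀ θ ∈ Strip δ, g (θ + 1) = g θ) {y : ℝ} (hy : |y| < δ) (n : ℤ) :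
    fourierCoeffOn zero_lt_one (fun x : ℝ => g (x + y * I)) n =
      realFourierCoeff g n * fourierMode n (y * I) := by
  have hmodeg : ∀ θ ∈ Strip δ,
      fourierMode (-n) (θ + 1) * g (θ + 1) = fourierMode (-n) θ * g θ := fun θ hθ => by
    rw [hper θ hθ, fourierMode_add, fourierMode_one, mul_one]
  rw [realFourierCoeff, fourierCoeffOn_zero_lt_one_eq, fourierCoeffOn_zero_lt_one_eq,
    ← integral_add_mul_I_eq (F := fun θ => fourierMode (-n) θ * g θ)
      ((differentiable_fourierMode (-n)).differentiableOn.mul hg) hmodeg hy,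
    ← intervalIntegral.integral_mul_const]
  refine intervalIntegral.integral_congr fun x _ => ?_
  simp only [fourierMode_add]
  linear_combination (-(fourierMode (-n) x * g (x + y * I))) * fourierMode_neg_mul_self n (y * I)

lemma norm_realFourierCoeff_le (hg : DifferentiableOn ℂ g (Strip δ))
    (hper : ∀ θ ∈ Strip δ, g (θ + 1) = g θ) {y : ℝ} (hy : |y| < δ) (n : ℤ) :
    ‖realFourierCoeff g n‖ ≤
      (∫ x in (0 : ℝ)..1, ‖g (x + y * I)‖) * Real.exp (2 * Real.pi * n * y) := by
  have h := norm_fourierCoeffOn_le (fun x : ℝ => g (x + y * I)) n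
  rw [fourierCoeffOn_add_mul_I hg hper hy, norm_mul, norm_fourierMode, Real.exp_neg,
    ← div_eq_mul_inv, div_le_iff₀ (Real.exp_pos _)] at h
  simpa using h

lemma hasStripDecay_realFourierCoeff (hg : DifferentiableOn ℂ g (Strip δ))
    (hper : ∀ θ ∈ Strip δ, g (θ + 1) = g θ) : HasStripDecay δ (realFourierCoeff g) := by
  intro s hs
  let M (y : ℝ) : ℝ := ∫ x in (0 : ℝ)..1, ‖g (x + y * I)‖
  refine .of_bound (max (M (-s)) (M s)) (.of_forall fun n => ?_)
  rw [Real.norm_of_nonneg (Real.exp_nonneg _)]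
  -- The contour moves to height `-s` for `n ≥ 0` and to height `s` for `n ≤ 0`.
  rcases le_total 0 (n : ℝ) with hn | hn
  · refine (norm_realFourierCoeff_le hg hper (y := -s) (by rwa [abs_neg]) n).trans ?_
    rw [abs_of_nonneg hn, show 2 * Real.pi * n * -s = -(2 * Real.pi * s * n) by ring]
    gcongr
    exact le_max_left _ _
  · refine (norm_realFourierCoeff_le hg hper hs n).trans ?_
    rw [abs_of_nonpos hn, show 2 * Real.pi * n * s = -(2 * Real.pi * s * -n) by ring]
    gcongr
    exact le_max_right _ _

lemma hasSum_realFourierCoeff_mul_fourierMode (hg : DifferentiableOn ℂ g (Strip δ))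
    (hper : ∀ θ ∈ Strip δ, g (θ + 1) = g θ) {θ : ℂ} (hθ : θ ∈ Strip δ) :
    HasSum (fun n => realFourierCoeff g n * fourierMode n θ) (g θ) := by
  have hmem (x : ℝ) : (x + θ.im * I : ℂ) ∈ Strip δ := ofReal_add_mul_I_mem_Strip hθ x
  have hcont : Continuous fun x : ℝ => g (x + θ.im * I) :=
    hg.continuousOn.comp_continuous (by fun_prop) hmem
  have hperiodic : Function.Periodic (fun x : ℝ => g (x + θ.im * I)) 1 := fun x => by
    simpa [add_right_comm] using hper _ (hmem x)
  have hcoeff : fourierCoeffOn zero_lt_one (fun x : ℝ => g (x + θ.im * I)) =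
      fun n => realFourierCoeff g n * fourierMode n (θ.im * I) :=
    funext (fourierCoeffOn_add_mul_I hg hper hθ)
  have hsummable : Summable (fourierCoeffOn zero_lt_one fun x : ℝ => g (x + θ.im * I)) := by
    rw [hcoeff]
    refine (hasStripDecay_realFourierCoeff hg hper).summable_mul_fourierMode ?_
    simpa using hmem 0
  have hsum := hasSum_fourierCoeffOn_mul_fourierMode hcont hperiodic hsummable θ.re
  simpa only [hcoeff, mul_assoc, ← fourierMode_add, add_comm (θ.im * I : ℂ), re_add_im] using hsum

end FourierCoefficients

section Cohomological

open Filter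

lemma add_ofReal_mem_Strip {δ : ℝ} {θ : ℂ} (h : θ ∈ Strip δ) (a : ℝ) : θ + a ∈ Strip δ := by
  simpa [Strip] using h

/-- The Fourier coefficients of the solution of `v (θ + α) - v θ = g θ - ∫ g`. For `n = 0` the
divisor vanishes, and the convention `0⁻¹ = 0` normalises the solution to have mean zero. -/
noncomputable def cohomologicalCoeff (α : ℝ) (g : ℂ → ℂ) (n : ℤ) : ℂ :=
  realFourierCoeff g n * (fourierMode n α - 1)⁻¹

variable {α δ : ℝ} {g : ℂ → ℂ}

lemma hasStripDecay_cohomologicalCoeff (hα : Irrational α)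
    (hΓ : (fun N => Real.log (GammaA α N)) =o[atTop] fun N : ℕ => (N : ℝ))
    (hg : DifferentiableOn ℂ g (Strip δ)) (hper : ∀ θ ∈ Strip δ, g (θ + 1) = g θ) :
    HasStripDecay δ (cohomologicalCoeff α g) :=
  (hasStripDecay_realFourierCoeff hg hper).mul_of_subexponential fun _ =>
    isBigO_inv_fourierMode_sub_one hα hΓ

lemma cohomologicalCoeff_mul_fourierMode_add_sub (hα : Irrational α) (g : ℂ → ℂ) (n : ℤ) (θ : ℂ) :
    cohomologicalCoeff α g n * fourierMode n (θ + α) - cohomologicalCoeff α g n * fourierMode n θ =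
      realFourierCoeff g n * fourierMode n θ - if n = 0 then realFourierCoeff g 0 else 0 := by
  rcases eq_or_ne n 0 with rfl | hn
  · simp [cohomologicalCoeff, fourierMode_zero_left]
  · have hdivisor := fourierMode_sub_one_ne_zero hα hn
    rw [if_neg hn, cohomologicalCoeff, fourierMode_add]
    field_simp
    ring

lemma exists_cohomological_solution (hα : Irrational α)
    (hΓ : (fun N => Real.log (GammaA α N)) =o[atTop] fun N : ℕ => (N : ℝ))
    (hg : DifferentiableOn ℂ g (Strip δ)) (hper : ∀ θ ∈ Strip δ, g (θ + 1) = g θ) :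
    ∃ v : ℂ → ℂ, DifferentiableOn ℂ v (Strip δ) ∧ (∀ θ, v (θ + 1) = v θ) ∧
      ∀ θ ∈ Strip δ, v (θ + α) - v θ = g θ - ∫ x in (0 : ℝ)..1, g x := by
  have hc := hasStripDecay_cohomologicalCoeff hα hΓ hg hper
  refine ⟨fun θ => ∑' n, cohomologicalCoeff α g n * fourierMode n θ, hc.differentiableOn_tsum,
    fun θ => by simp only [fourierMode_add, fourierMode_one, mul_one], fun θ hθ => ?_⟩
  rw [← (hc.summable_mul_fourierMode (add_ofReal_mem_Strip hθ α)).tsum_sub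
    (hc.summable_mul_fourierMode hθ), ← realFourierCoeff_zero]
  simp only [cohomologicalCoeff_mul_fourierMode_add_sub hα]
  exact ((hasSum_realFourierCoeff_mul_fourierMode hg hper hθ).sub
    (hasSum_ite_eq (0 : ℤ) (realFourierCoeff g 0))).tsum_eq

end Cohomological

theorem stmt_15_general (α : ℝ) (hα : Irrational α)
    (hΓ : (fun N => Real.log (GammaA α N)) =o[Filter.atTop] fun N : ℕ => (N : ℝ))
    (δ : ℝ) (β : ℂ) (g : ℂ → ℂ)
    (hg : DifferentiableOn ℂ g (Strip δ))
    (hper : ∀ θ ∈ Strip δ, g (θ + 1) = g θ)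
    (hmean : (∫ x in (0:ℝ)..1, g x) = 2 * Real.pi * Complex.I * β) :
    ∃ u₁ v : ℂ → ℂ,
      DifferentiableOn ℂ u₁ (Strip δ) ∧
      (∀ θ ∈ Strip δ, u₁ (θ + 1) = u₁ θ) ∧
      (∀ θ ∈ Strip δ, u₁ θ ≠ 0) ∧
      DifferentiableOn ℂ v (Strip δ) ∧
      (∀ θ ∈ Strip δ, v (θ + 1) = v θ) ∧
      (∀ θ ∈ Strip δ, u₁ θ = Complex.exp (v θ)) ∧
      ∀ θ ∈ Strip δ,
        u₁ θ * Complex.exp (g θ) =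
          Complex.exp (2 * Real.pi * Complex.I * β) * u₁ (θ + α) := by
  obtain ⟨v, hv, hvper, hveq⟩ := exists_cohomological_solution hα hΓ hg hper
  refine ⟨fun θ => Complex.exp (v θ), v, hv.cexp, fun θ _ => by simp only [hvper],
    fun _ _ => Complex.exp_ne_zero _, hv, fun θ _ => hvper θ, fun _ _ => rfl, fun θ hθ => ?_⟩
  rw [← Complex.exp_add, ← Complex.exp_add]
  congr 1
  linear_combination hmean - hveq θ hθ

/-- existence of a nowhere-vanishing periodic holomorphic solution
u₁ = e^v of the multiplicative cohomological equation u₁(θ) e^{g(θ)} = e^{2πiβ} u₁(θ+α). -/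
theorem stmt_15 (α : ℝ) (hα : Irrational α) (hB : BrjunoCond α)
    (δ : ℝ) (hδ : 0 < δ) (β : ℝ) (g : ℂ → ℂ)
    (hg : DifferentiableOn ℂ g (Strip δ))
    (hper : ∀ θ ∈ Strip δ, g (θ + 1) = g θ)
    (hbd : ∃ C : ℝ, ∀ θ ∈ Strip δ, ‖g θ‖ ≤ C)
    (hmean : (∫ x in (0:ℝ)..1, g x) = 2 * Real.pi * Complex.I * β) :
    ∃ u₁ v : ℂ → ℂ,
      DifferentiableOn ℂ u₁ (Strip δ) ∧
      (∀ θ ∈ Strip δ, u₁ (θ + 1) = u₁ θ) ∧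
      (∀ θ ∈ Strip δ, u₁ θ ≠ 0) ∧
      DifferentiableOn ℂ v (Strip δ) ∧
      (∀ θ ∈ Strip δ, v (θ + 1) = v θ) ∧
      (∀ θ ∈ Strip δ, u₁ θ = Complex.exp (v θ)) ∧
      ∀ θ ∈ Strip δ,
        u₁ θ * Complex.exp (g θ) =
          Complex.exp (2 * Real.pi * Complex.I * β) * u₁ (θ + α) := by
  exact stmt_15_general α hα (hB.isLittleO_log_GammaA hα) δ β g hg hper hmean
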